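/- For every x ∈ (0, π/2), the chain of inequalities cos(x/√3) < (3/4)·cos(2x/3) + 1/4 < (2/3)·cos(x/√2) + 1/3 < (16/27)·cos(3x/4) + 11/27 < sin(x)/x < (5/9)·cos(√15·x/5) + 4/9 < cos²(x/√6) < (4/9)·cos(√3·x/2) + 5/9 < (1/3)·cos(x) + 2/3 holds. -/

import Mathlib

open Real

lemma aux_mono (f g : ℝ → ℝ) (hd : ∀ x, HasDerivAt f (g x) x) (h0 : f 0 = 0)
    (hg : ∀ x, 0 ≤ x → 0 ≤ g x) (x : ℝ) (hx : 0 ≤ x) : 0 ≤ f x := by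
  have hm : MonotoneOn f (Set.Ici 0) := by
    apply monotoneOn_of_deriv_nonneg (convex_Ici 0)
    · exact fun y _ => (hd y).continuousAt.continuousWithinAt
    · exact fun y _ => (hd y).differentiableAt.differentiableWithinAt
    · intro y hy
      rw [interior_Ici] at hy
      rw [(hd y).deriv]
      exact hg y (le_of_lt hy)
  have := hm (Set.mem_Ici.2 le_rfl) (Set.mem_Ici.2 hx) hx
  linarith

lemma T2 (x : ℝ) (hx : 0 ≤ x) : 0 ≤ (-1) + x ^ 2 / 2 + Real.cos x := by
  refine aux_mono (fun x => (-1) + x ^ 2 / 2 + Real.cos x) (fun x => x - Real.sin x) ?_ (by norm_num) (fun x hx => by linarith [Real.sin_le hx]) x hx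
  intro x
  have h := ((((hasDerivAt_id x).pow 0).const_mul ((-1) / 1 : ℝ)).add (((hasDerivAt_id x).pow 2).const_mul ((1) / 2 : ℝ))).sub ((Real.hasDerivAt_cos x).const_mul (-1 : ℝ))
  refine (h.congr_deriv ?_).congr_of_eventuallyEq (Filter.Eventually.of_forall fun y => ?_)
  · simp only [id]
    push_cast
    ring
  · simp only [Pi.add_apply, Pi.sub_apply, Pi.pow_apply, id]
    ring

lemma T3 (x : ℝ) (hx : 0 ≤ x) : 0 ≤ (-1) * x ^ 1 / 1 + (1) * x ^ 3 / 6 - (-1) * Real.sin x := by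
  refine aux_mono (fun x => (-1) * x ^ 1 / 1 + (1) * x ^ 3 / 6 - (-1) * Real.sin x) (fun x => (-1) + x ^ 2 / 2 + Real.cos x) ?_ (by norm_num) (fun x hx => T2 x hx) x hx
  intro x
  have h := ((((hasDerivAt_id x).pow 1).const_mul ((-1) / 1 : ℝ)).add (((hasDerivAt_id x).pow 3).const_mul ((1) / 6 : ℝ))).sub ((Real.hasDerivAt_sin x).const_mul (-1 : ℝ))
  refine (h.congr_deriv ?_).congr_of_eventuallyEq (Filter.Eventually.of_forall fun y => ?_)
  · simp only [id]
    push_cast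
    ring
  · simp only [Pi.add_apply, Pi.sub_apply, Pi.pow_apply, id]
    ring

lemma T4 (x : ℝ) (hx : 0 ≤ x) : 0 ≤ (1) * x ^ 0 / 1 + (-1) * x ^ 2 / 2 + (1) * x ^ 4 / 24 - (1) * Real.cos x := by
  refine aux_mono (fun x => (1) * x ^ 0 / 1 + (-1) * x ^ 2 / 2 + (1) * x ^ 4 / 24 - (1) * Real.cos x) (fun x => (-1) * x ^ 1 / 1 + (1) * x ^ 3 / 6 - (-1) * Real.sin x) ?_ (by norm_num) (fun x hx => T3 x hx) x hx
  intro x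
  have h := (((((hasDerivAt_id x).pow 0).const_mul ((1) / 1 : ℝ)).add (((hasDerivAt_id x).pow 2).const_mul ((-1) / 2 : ℝ))).add (((hasDerivAt_id x).pow 4).const_mul ((1) / 24 : ℝ))).sub ((Real.hasDerivAt_cos x).const_mul (1 : ℝ))
  refine (h.congr_deriv ?_).congr_of_eventuallyEq (Filter.Eventually.of_forall fun y => ?_)
  · simp only [id]
    push_cast
    ring
  · simp only [Pi.add_apply, Pi.sub_apply, Pi.pow_apply, id]
    ring

lemma T5 (x : ℝ) (hx : 0 ≤ x) : 0 ≤ (1) * x ^ 1 / 1 + (-1) * x ^ 3 / 6 + (1) * x ^ 5 / 120 - (1) * Real.sin x := by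
  refine aux_mono (fun x => (1) * x ^ 1 / 1 + (-1) * x ^ 3 / 6 + (1) * x ^ 5 / 120 - (1) * Real.sin x) (fun x => (1) * x ^ 0 / 1 + (-1) * x ^ 2 / 2 + (1) * x ^ 4 / 24 - (1) * Real.cos x) ?_ (by norm_num) (fun x hx => T4 x hx) x hx
  intro x
  have h := (((((hasDerivAt_id x).pow 1).const_mul ((1) / 1 : ℝ)).add (((hasDerivAt_id x).pow 3).const_mul ((-1) / 6 : ℝ))).add (((hasDerivAt_id x).pow 5).const_mul ((1) / 120 : ℝ))).sub ((Real.hasDerivAt_sin x).const_mul (1 : ℝ))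
  refine (h.congr_deriv ?_).congr_of_eventuallyEq (Filter.Eventually.of_forall fun y => ?_)
  · simp only [id]
    push_cast
    ring
  · simp only [Pi.add_apply, Pi.sub_apply, Pi.pow_apply, id]
    ring

lemma T6 (x : ℝ) (hx : 0 ≤ x) : 0 ≤ (-1) * x ^ 0 / 1 + (1) * x ^ 2 / 2 + (-1) * x ^ 4 / 24 + (1) * x ^ 6 / 720 - (-1) * Real.cos x := by
  refine aux_mono (fun x => (-1) * x ^ 0 / 1 + (1) * x ^ 2 / 2 + (-1) * x ^ 4 / 24 + (1) * x ^ 6 / 720 - (-1) * Real.cos x) (fun x => (1) * x ^ 1 / 1 + (-1) * x ^ 3 / 6 + (1) * x ^ 5 / 120 - (1) * Real.sin x) ?_ (by norm_num) (fun x hx => T5 x hx) x hx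
  intro x
  have h := ((((((hasDerivAt_id x).pow 0).const_mul ((-1) / 1 : ℝ)).add (((hasDerivAt_id x).pow 2).const_mul ((1) / 2 : ℝ))).add (((hasDerivAt_id x).pow 4).const_mul ((-1) / 24 : ℝ))).add (((hasDerivAt_id x).pow 6).const_mul ((1) / 720 : ℝ))).sub ((Real.hasDerivAt_cos x).const_mul (-1 : ℝ))
  refine (h.congr_deriv ?_).congr_of_eventuallyEq (Filter.Eventually.of_forall fun y => ?_)
  · simp only [id]
    push_cast
    ring
  · simp only [Pi.add_apply, Pi.sub_apply, Pi.pow_apply, id]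
    ring

lemma T7 (x : ℝ) (hx : 0 ≤ x) : 0 ≤ (-1) * x ^ 1 / 1 + (1) * x ^ 3 / 6 + (-1) * x ^ 5 / 120 + (1) * x ^ 7 / 5040 - (-1) * Real.sin x := by
  refine aux_mono (fun x => (-1) * x ^ 1 / 1 + (1) * x ^ 3 / 6 + (-1) * x ^ 5 / 120 + (1) * x ^ 7 / 5040 - (-1) * Real.sin x) (fun x => (-1) * x ^ 0 / 1 + (1) * x ^ 2 / 2 + (-1) * x ^ 4 / 24 + (1) * x ^ 6 / 720 - (-1) * Real.cos x) ?_ (by norm_num) (fun x hx => T6 x hx) x hx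
  intro x
  have h := ((((((hasDerivAt_id x).pow 1).const_mul ((-1) / 1 : ℝ)).add (((hasDerivAt_id x).pow 3).const_mul ((1) / 6 : ℝ))).add (((hasDerivAt_id x).pow 5).const_mul ((-1) / 120 : ℝ))).add (((hasDerivAt_id x).pow 7).const_mul ((1) / 5040 : ℝ))).sub ((Real.hasDerivAt_sin x).const_mul (-1 : ℝ))
  refine (h.congr_deriv ?_).congr_of_eventuallyEq (Filter.Eventually.of_forall fun y => ?_)
  · simp only [id]
    push_cast
    ring
  · simp only [Pi.add_apply, Pi.sub_apply, Pi.pow_apply, id]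
    ring

lemma T8 (x : ℝ) (hx : 0 ≤ x) : 0 ≤ (1) * x ^ 0 / 1 + (-1) * x ^ 2 / 2 + (1) * x ^ 4 / 24 + (-1) * x ^ 6 / 720 + (1) * x ^ 8 / 40320 - (1) * Real.cos x := by
  refine aux_mono (fun x => (1) * x ^ 0 / 1 + (-1) * x ^ 2 / 2 + (1) * x ^ 4 / 24 + (-1) * x ^ 6 / 720 + (1) * x ^ 8 / 40320 - (1) * Real.cos x) (fun x => (-1) * x ^ 1 / 1 + (1) * x ^ 3 / 6 + (-1) * x ^ 5 / 120 + (1) * x ^ 7 / 5040 - (-1) * Real.sin x) ?_ (by norm_num) (fun x hx => T7 x hx) x hx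
  intro x
  have h := (((((((hasDerivAt_id x).pow 0).const_mul ((1) / 1 : ℝ)).add (((hasDerivAt_id x).pow 2).const_mul ((-1) / 2 : ℝ))).add (((hasDerivAt_id x).pow 4).const_mul ((1) / 24 : ℝ))).add (((hasDerivAt_id x).pow 6).const_mul ((-1) / 720 : ℝ))).add (((hasDerivAt_id x).pow 8).const_mul ((1) / 40320 : ℝ))).sub ((Real.hasDerivAt_cos x).const_mul (1 : ℝ))
  refine (h.congr_deriv ?_).congr_of_eventuallyEq (Filter.Eventually.of_forall fun y => ?_)
  · simp only [id]
    push_cast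
    ring
  · simp only [Pi.add_apply, Pi.sub_apply, Pi.pow_apply, id]
    ring

lemma T9 (x : ℝ) (hx : 0 ≤ x) : 0 ≤ (1) * x ^ 1 / 1 + (-1) * x ^ 3 / 6 + (1) * x ^ 5 / 120 + (-1) * x ^ 7 / 5040 + (1) * x ^ 9 / 362880 - (1) * Real.sin x := by
  refine aux_mono (fun x => (1) * x ^ 1 / 1 + (-1) * x ^ 3 / 6 + (1) * x ^ 5 / 120 + (-1) * x ^ 7 / 5040 + (1) * x ^ 9 / 362880 - (1) * Real.sin x) (fun x => (1) * x ^ 0 / 1 + (-1) * x ^ 2 / 2 + (1) * x ^ 4 / 24 + (-1) * x ^ 6 / 720 + (1) * x ^ 8 / 40320 - (1) * Real.cos x) ?_ (by norm_num) (fun x hx => T8 x hx) x hx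
  intro x
  have h := (((((((hasDerivAt_id x).pow 1).const_mul ((1) / 1 : ℝ)).add (((hasDerivAt_id x).pow 3).const_mul ((-1) / 6 : ℝ))).add (((hasDerivAt_id x).pow 5).const_mul ((1) / 120 : ℝ))).add (((hasDerivAt_id x).pow 7).const_mul ((-1) / 5040 : ℝ))).add (((hasDerivAt_id x).pow 9).const_mul ((1) / 362880 : ℝ))).sub ((Real.hasDerivAt_sin x).const_mul (1 : ℝ))
  refine (h.congr_deriv ?_).congr_of_eventuallyEq (Filter.Eventually.of_forall fun y => ?_)
  · simp only [id]
    push_cast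
    ring
  · simp only [Pi.add_apply, Pi.sub_apply, Pi.pow_apply, id]
    ring

/-- bounds for `f_t(x) = 1 + (cos (k x) - 1)/(3 k^2)`, multiplied out -/
lemma cos_lo (a k x : ℝ) (hk : 0 ≤ k) (hx : 0 ≤ x) (ha : 0 ≤ a) (t : ℝ) (ht : k ^ 2 = t)
    (hat : a * t = 1 / 3) :
    1 - x ^ 2 / 6 + t * x ^ 4 / 72 - t ^ 2 * x ^ 6 / 2160 ≤ a * Real.cos (k * x) + (1 - a) := by
  have h := mul_nonneg ha (T6 (k * x) (mul_nonneg hk hx))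
  have e2 : a * (k * x) ^ 2 = x ^ 2 / 3 := by
    rw [mul_pow, ht]; linear_combination x ^ 2 * hat
  have e4 : a * (k * x) ^ 4 = t * x ^ 4 / 3 := by
    rw [show (k * x) ^ 4 = (k ^ 2) ^ 2 * x ^ 4 by ring, ht]; linear_combination t * x ^ 4 * hat
  have e6 : a * (k * x) ^ 6 = t ^ 2 * x ^ 6 / 3 := by
    rw [show (k * x) ^ 6 = (k ^ 2) ^ 3 * x ^ 6 by ring, ht]; linear_combination t ^ 2 * x ^ 6 * hat
  linarith

lemma cos_hi (a k x : ℝ) (hk : 0 ≤ k) (hx : 0 ≤ x) (ha : 0 ≤ a) (t : ℝ) (ht : k ^ 2 = t)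
    (hat : a * t = 1 / 3) :
    a * Real.cos (k * x) + (1 - a) ≤ 1 - x ^ 2 / 6 + t * x ^ 4 / 72 - t ^ 2 * x ^ 6 / 2160
      + t ^ 3 * x ^ 8 / 120960 := by
  have h := mul_nonneg ha (T8 (k * x) (mul_nonneg hk hx))
  have e2 : a * (k * x) ^ 2 = x ^ 2 / 3 := by
    rw [mul_pow, ht]; linear_combination x ^ 2 * hat
  have e4 : a * (k * x) ^ 4 = t * x ^ 4 / 3 := by
    rw [show (k * x) ^ 4 = (k ^ 2) ^ 2 * x ^ 4 by ring, ht]; linear_combination t * x ^ 4 * hat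
  have e6 : a * (k * x) ^ 6 = t ^ 2 * x ^ 6 / 3 := by
    rw [show (k * x) ^ 6 = (k ^ 2) ^ 3 * x ^ 6 by ring, ht]; linear_combination t ^ 2 * x ^ 6 * hat
  have e8 : a * (k * x) ^ 8 = t ^ 3 * x ^ 8 / 3 := by
    rw [show (k * x) ^ 8 = (k ^ 2) ^ 4 * x ^ 8 by ring, ht]; linear_combination t ^ 3 * x ^ 8 * hat
  linarith

/-- For `x ∈ (0, π/2)`, the chain of inequalities
`cos(x/√3) < (3/4)cos(2x/3) + 1/4 < (2/3)cos(x/√2) + 1/3 < (16/27)cos(3x/4) + 11/27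
 < sin x / x < (5/9)cos(√15 x/5) + 4/9 < cos²(x/√6) < (4/9)cos(√3 x/2) + 5/9
 < (1/3)cos x + 2/3`. -/
theorem stmt_11 (x : ℝ) (hx : x ∈ Set.Ioo (0 : ℝ) (π / 2)) :
    Real.cos (x / Real.sqrt 3) < 3 / 4 * Real.cos (2 * x / 3) + 1 / 4 ∧
    3 / 4 * Real.cos (2 * x / 3) + 1 / 4 < 2 / 3 * Real.cos (x / Real.sqrt 2) + 1 / 3 ∧
    2 / 3 * Real.cos (x / Real.sqrt 2) + 1 / 3 < 16 / 27 * Real.cos (3 * x / 4) + 11 / 27 ∧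
    16 / 27 * Real.cos (3 * x / 4) + 11 / 27 < Real.sin x / x ∧
    Real.sin x / x < 5 / 9 * Real.cos (Real.sqrt 15 * x / 5) + 4 / 9 ∧
    5 / 9 * Real.cos (Real.sqrt 15 * x / 5) + 4 / 9 < Real.cos (x / Real.sqrt 6) ^ 2 ∧
    Real.cos (x / Real.sqrt 6) ^ 2 < 4 / 9 * Real.cos (Real.sqrt 3 * x / 2) + 5 / 9 ∧
    4 / 9 * Real.cos (Real.sqrt 3 * x / 2) + 5 / 9 < 1 / 3 * Real.cos x + 2 / 3 := by
  obtain ⟨h0, h1⟩ := hx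
  have hx0 : 0 ≤ x := h0.le
  have hx1 : x < 1.5708 := by linarith [Real.pi_lt_d4]
  have hy : x ^ 2 < 2.5 := by nlinarith
  have p4 : 0 < x ^ 4 := by positivity
  have p6 : x ^ 6 < 2.5 * x ^ 4 := by nlinarith
  have p6' : 0 < x ^ 6 := by positivity
  have p8 : x ^ 8 < 2.5 * x ^ 6 := by nlinarith
  have p8' : 0 < x ^ 8 := by positivity
  have k0 : (1 / √3 : ℝ) ^ 2 = 1 / 3 := by
    norm_num [div_pow]
  have l0 := cos_lo (1) (1 / √3) x (by positivity) hx0 (by norm_num) (1 / 3) k0 (by norm_num)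
  have u0 := cos_hi (1) (1 / √3) x (by positivity) hx0 (by norm_num) (1 / 3) k0 (by norm_num)
  have k1 : (2 / 3 : ℝ) ^ 2 = 4 / 9 := by
    norm_num [div_pow]
  have l1 := cos_lo (3 / 4) (2 / 3) x (by positivity) hx0 (by norm_num) (4 / 9) k1 (by norm_num)
  have u1 := cos_hi (3 / 4) (2 / 3) x (by positivity) hx0 (by norm_num) (4 / 9) k1 (by norm_num)
  have k2 : (1 / √2 : ℝ) ^ 2 = 1 / 2 := by
    norm_num [div_pow]
  have l2 := cos_lo (2 / 3) (1 / √2) x (by positivity) hx0 (by norm_num) (1 / 2) k2 (by norm_num)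
  have u2 := cos_hi (2 / 3) (1 / √2) x (by positivity) hx0 (by norm_num) (1 / 2) k2 (by norm_num)
  have k3 : (3 / 4 : ℝ) ^ 2 = 9 / 16 := by
    norm_num [div_pow]
  have l3 := cos_lo (16 / 27) (3 / 4) x (by positivity) hx0 (by norm_num) (9 / 16) k3 (by norm_num)
  have u3 := cos_hi (16 / 27) (3 / 4) x (by positivity) hx0 (by norm_num) (9 / 16) k3 (by norm_num)
  have k4 : (√15 / 5 : ℝ) ^ 2 = 3 / 5 := by
    norm_num [div_pow]
  have l4 := cos_lo (5 / 9) (√15 / 5) x (by positivity) hx0 (by norm_num) (3 / 5) k4 (by norm_num)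
  have u4 := cos_hi (5 / 9) (√15 / 5) x (by positivity) hx0 (by norm_num) (3 / 5) k4 (by norm_num)
  have k5 : (2 / √6 : ℝ) ^ 2 = 2 / 3 := by
    norm_num [div_pow]
  have l5 := cos_lo (1 / 2) (2 / √6) x (by positivity) hx0 (by norm_num) (2 / 3) k5 (by norm_num)
  have u5 := cos_hi (1 / 2) (2 / √6) x (by positivity) hx0 (by norm_num) (2 / 3) k5 (by norm_num)
  have k6 : (√3 / 2 : ℝ) ^ 2 = 3 / 4 := by
    norm_num [div_pow]
  have l6 := cos_lo (4 / 9) (√3 / 2) x (by positivity) hx0 (by norm_num) (3 / 4) k6 (by norm_num)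
  have u6 := cos_hi (4 / 9) (√3 / 2) x (by positivity) hx0 (by norm_num) (3 / 4) k6 (by norm_num)
  have k7 : (1 : ℝ) ^ 2 = 1 := by
    norm_num [div_pow]
  have l7 := cos_lo (1 / 3) (1) x (by positivity) hx0 (by norm_num) (1) k7 (by norm_num)
  have u7 := cos_hi (1 / 3) (1) x (by positivity) hx0 (by norm_num) (1) k7 (by norm_num)
  rw [show 1 / √3 * x = x / √3 by ring] at l0 u0
  rw [show 2 / 3 * x = 2 * x / 3 by ring] at l1 u1
  rw [show 1 / √2 * x = x / √2 by ring] at l2 u2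
  rw [show 3 / 4 * x = 3 * x / 4 by ring] at l3 u3
  rw [show √15 / 5 * x = √15 * x / 5 by ring] at l4 u4
  rw [show 2 / √6 * x = 2 * (x / √6) by ring, Real.cos_two_mul] at l5 u5
  rw [show √3 / 2 * x = √3 * x / 2 by ring] at l6 u6
  rw [one_mul x] at l7 u7
  have s7 := T7 x hx0
  have s9 := T9 x hx0
  refine ⟨?_, ?_, ?_, ?_, ?_, ?_, ?_, ?_⟩
  · linarith
  · linarith
  · linarith
  · have : 1 - x ^ 2 / 6 + x ^ 4 / 120 - x ^ 6 / 5040 ≤ Real.sin x / x := by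
      rw [le_div_iff₀ h0]
      linarith
    linarith
  · have : Real.sin x / x ≤ 1 - x ^ 2 / 6 + x ^ 4 / 120 - x ^ 6 / 5040 + x ^ 8 / 362880 := by
      rw [div_le_iff₀ h0]
      linarith
    linarith
  · linarith
  · linarith
  · linarith
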